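/- Let N ∈ ℕ and let f₀ : ℝ³ × ℝ³ → ℝ be C^{N+1} with sup_{x,v} ⟨x⟩^{N+5} |∂_v^α f₀(x,v)| < ∞ for all |α| ≤ N+1. There exist constants C_α ∈ ℝ (independent of f₀) such that the solution f(t,x,v) = f₀(x − vt, v) of the free transport equation satisfies, for all t ≥ 2 and x ∈ ℝ³: | t³ ∫_{ℝ³} f(t,x,v) dv − Σ_{|α| ≤ N} (C_α / t^{|α|}) ∫_{ℝ³} y^α ∂_v^α f₀(y, x/t) dy | ≤ (C / t^{N+1}) Σ_{|α| = N+1} sup_{z,v} ⟨z⟩^{N+5} |∂_v^α f₀(z,v)|, for some constant C depending only on N. -/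

import Mathlib

open MeasureTheory Real

abbrev E3 := EuclideanSpace ℝ (Fin 3)

noncomputable def e3 (i : Fin 3) : E3 := EuclideanSpace.single i 1

/-- The velocity derivative `∂_{vⁱ}` for functions of `(x,v)`. -/
noncomputable def Dv (i : Fin 3) (h : E3 × E3 → ℝ) : E3 × E3 → ℝ :=
  fun q => fderiv ℝ h q (0, e3 i)

/-- Iterated velocity derivatives `∂ᵥ^m`. -/
noncomputable def Dvpow (m : Fin 3 → ℕ) (h : E3 × E3 → ℝ) : E3 × E3 → ℝ :=
  (Dv 0)^[m 0] ((Dv 1)^[m 1] ((Dv 2)^[m 2] h))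

/-- Multi-indices of length `≤ N`. -/
def MIdx (N : ℕ) : Finset (Fin 3 → ℕ) :=
  (Finset.Iic (fun _ => N : Fin 3 → ℕ)).filter fun m => (∑ i, m i) ≤ N

/-- Multi-indices of length exactly `N + 1`. -/
def MIdxTop (N : ℕ) : Finset (Fin 3 → ℕ) :=
  (Finset.Iic (fun _ => N + 1 : Fin 3 → ℕ)).filter fun m => (∑ i, m i) = N + 1

lemma Dv_contDiff (i : Fin 3) (n : ℕ) (g : E3 × E3 → ℝ) (hg : ContDiff ℝ (n + 1 : ℕ) g) :
    ContDiff ℝ (n : ℕ) (Dv i g) := by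
  unfold Dv
  have : ContDiff ℝ (n : ℕ) (fderiv ℝ g) := hg.fderiv_right (by norm_cast)
  exact this.clm_apply contDiff_const

lemma Dv_iter_contDiff (i : Fin 3) (k : ℕ) : ∀ (n : ℕ) (g : E3 × E3 → ℝ),
    ContDiff ℝ (n + k : ℕ) g → ContDiff ℝ (n : ℕ) ((Dv i)^[k] g) := by
  induction k with
  | zero => intro n g hg; simpa using hg
  | succ k ih =>
    intro n g hg
    rw [Function.iterate_succ_apply]
    exact ih n _ (Dv_contDiff i (n + k) g hg)

lemma hasDerivAt_line (i : Fin 3) (g : E3 × E3 → ℝ) (hg : Differentiable ℝ g) (y w : E3) (s : ℝ) :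
    HasDerivAt (fun s : ℝ => g (y, w + s • e3 i)) (Dv i g (y, w + s • e3 i)) s := by
  have h1 : HasDerivAt (fun s : ℝ => w + s • e3 i) (e3 i) s := by
    have := ((hasDerivAt_id s).smul_const (e3 i)).const_add w
    simpa using this
  have h2 : HasDerivAt (fun s : ℝ => (y, w + s • e3 i)) ((0 : E3), e3 i) s :=
    (hasDerivAt_const s y).prodMk h1
  exact (hg _).hasFDerivAt.comp_hasDerivAt s h2

lemma taylor_line (i : Fin 3) (y : E3) (M : ℝ) (k : ℕ) : ∀ (g : E3 × E3 → ℝ),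
    ContDiff ℝ (k : ℕ) g → (∀ v, |(Dv i)^[k] g (y, v)| ≤ M) → ∀ (w : E3) (h : ℝ),
    |g (y, w + h • e3 i) - ∑ c ∈ Finset.range k, h ^ c / (c.factorial : ℝ) * (Dv i)^[c] g (y, w)|
      ≤ |h| ^ k * M := by
  induction k with
  | zero => intro g hg hM w h; simpa using hM _
  | succ k ih =>
    intro g hg hM w h
    have hd : Differentiable ℝ g := hg.differentiable (by simp)
    have ih' := ih (Dv i g) (Dv_contDiff i k g hg) hM w
    have hM0 : 0 ≤ M := (abs_nonneg _).trans (hM 0)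
    set R : ℝ → ℝ := fun h => g (y, w + h • e3 i) -
      ∑ c ∈ Finset.range (k+1), h ^ c / (c.factorial : ℝ) * (Dv i)^[c] g (y, w) with hR
    have hR' : ∀ s, HasDerivAt R (Dv i g (y, w + s • e3 i) -
        ∑ c ∈ Finset.range k, s ^ c / (c.factorial : ℝ) * (Dv i)^[c] (Dv i g) (y, w)) s := by
      intro s
      refine (hasDerivAt_line i g hd y w s).sub ?_
      have : HasDerivAt (fun h : ℝ => ∑ c ∈ Finset.range (k+1),
          h ^ c / (c.factorial : ℝ) * (Dv i)^[c] g (y, w))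
          (∑ c ∈ Finset.range (k+1), ((c : ℝ) * s ^ (c - 1)) / (c.factorial : ℝ) *
            (Dv i)^[c] g (y, w)) s := by
        apply HasDerivAt.fun_sum
        intro c _
        exact ((hasDerivAt_pow c s).div_const _).mul_const _
      refine this.congr_deriv (Eq.symm ?_)
      rw [Finset.sum_range_succ']
      simp only [Nat.cast_zero, zero_mul, zero_div, add_zero]
      refine Finset.sum_congr rfl fun c _ => ?_
      rw [Function.iterate_succ_apply, Nat.factorial_succ]
      have : (c.factorial : ℝ) ≠ 0 := by positivity
      push_cast
      field_simp
    have hR0 : R 0 = 0 := by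
      simp only [hR]
      rw [Finset.sum_range_succ']
      simp
    have := (convex_Icc (-|h|) |h|).norm_image_sub_le_of_norm_hasDerivWithin_le
      (f := R) (C := |h| ^ k * M) (x := 0) (y := h)
      (fun s _ => (hR' s).hasDerivWithinAt)
      (fun s hs => by
        rw [Real.norm_eq_abs]
        refine (ih' s).trans ?_
        have : |s| ≤ |h| := abs_le.2 hs
        gcongr)
      (by simp) ⟨neg_abs_le h, le_abs_self h⟩
    rw [hR0, sub_zero, sub_zero, Real.norm_eq_abs, Real.norm_eq_abs] at this
    calc |R h| ≤ _ := this
      _ = _ := by ring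

lemma step_combine (n : ℕ) (A h H M L : ℝ) (B B' : ℕ → ℝ) (hM : 0 ≤ M) (hL : 0 ≤ L)
    (hh : |h| ≤ H)
    (h1 : |A - ∑ c ∈ Finset.range n, h ^ c / (c.factorial : ℝ) * B c| ≤ |h| ^ n * M)
    (h2 : ∀ c < n, |B c - B' c| ≤ L * H ^ (n - c) * M) :
    |A - ∑ c ∈ Finset.range n, h ^ c / (c.factorial : ℝ) * B' c| ≤ (1 + n * L) * H ^ n * M := by
  have hH : 0 ≤ H := (abs_nonneg _).trans hh
  have e : A - ∑ c ∈ Finset.range n, h ^ c / (c.factorial : ℝ) * B' c =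
    (A - ∑ c ∈ Finset.range n, h ^ c / (c.factorial : ℝ) * B c) +
      ∑ c ∈ Finset.range n, h ^ c / (c.factorial : ℝ) * (B c - B' c) := by
    simp only [mul_sub, Finset.sum_sub_distrib]; ring
  rw [e]
  have h3 : |∑ c ∈ Finset.range n, h ^ c / (c.factorial : ℝ) * (B c - B' c)| ≤
      ∑ c ∈ Finset.range n, L * H ^ n * M := by
    refine (Finset.abs_sum_le_sum_abs _ _).trans (Finset.sum_le_sum fun c hc => ?_)
    have hc' := Finset.mem_range.1 hc
    rw [abs_mul, abs_div, abs_pow, Nat.abs_cast]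
    have hf : (1:ℝ) ≤ c.factorial := by exact_mod_cast Nat.one_le_iff_ne_zero.2 (Nat.factorial_ne_zero c)
    have a1 : |h| ^ c / (c.factorial : ℝ) ≤ H ^ c :=
      (div_le_self (by positivity) hf).trans (by gcongr)
    calc _ ≤ H ^ c * (L * H ^ (n - c) * M) := by
          gcongr
          exact h2 c hc'
      _ = L * (H ^ c * H ^ (n - c)) * M := by ring
      _ = _ := by rw [← pow_add, Nat.add_sub_cancel' hc'.le]
  have h4 : |h| ^ n * M ≤ H ^ n * M := by gcongr
  calc _ ≤ _ := abs_add_le _ _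
    _ ≤ H ^ n * M + ∑ c ∈ Finset.range n, L * H ^ n * M := add_le_add (h1.trans h4) h3
    _ = _ := by rw [Finset.sum_const, Finset.card_range, nsmul_eq_mul]; ring

lemma sum_MIdx (N : ℕ) (F : (Fin 3 → ℕ) → ℝ) :
    ∑ m ∈ MIdx N, F m = ∑ c ∈ Finset.range (N+1), ∑ b ∈ Finset.range (N+1-c),
      ∑ a ∈ Finset.range (N+1-c-b), F ![a,b,c] := by
  simp only [Finset.sum_sigma']
  refine Finset.sum_bij' (fun m _ => ⟨m 2, ⟨m 1, m 0⟩⟩) (fun p _ => ![p.2.2, p.2.1, p.1])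
    ?_ ?_ ?_ ?_ ?_
  · intro m hm
    simp only [MIdx, Finset.mem_filter, Fin.sum_univ_three] at hm
    simp only [Finset.mem_sigma, Finset.mem_range]
    omega
  · rintro ⟨c, ⟨b, a⟩⟩ hp
    simp only [Finset.mem_sigma, Finset.mem_range] at hp
    simp only [MIdx, Finset.mem_filter, Fin.sum_univ_three, Finset.mem_Iic, Pi.le_def, Fin.forall_fin_succ]
    simp
    omega
  · intro m _
    ext i; fin_cases i <;> rfl
  · rintro ⟨c, ⟨b, a⟩⟩ hp
    rfl
  · intro m _
    congr 1
    ext i; fin_cases i <;> rfl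

lemma taylor_three (N : ℕ) (f : E3 × E3 → ℝ) (hf : ContDiff ℝ (N + 1 : ℕ) f) (y w : E3)
    (h : Fin 3 → ℝ) (H M : ℝ) (hH : ∀ i, |h i| ≤ H)
    (hM : ∀ m : Fin 3 → ℕ, ∑ i, m i = N + 1 → ∀ v, |Dvpow m f (y, v)| ≤ M) :
    |f (y, w + h 0 • e3 0 + h 1 • e3 1 + h 2 • e3 2) -
      ∑ m ∈ MIdx N, (∏ i, h i ^ m i / ((m i).factorial : ℝ)) * Dvpow m f (y, w)| ≤
      (1 + (N + 1 : ℕ) * (1 + (N + 1 : ℕ) * 1)) * H ^ (N + 1) * M := by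
  have hM0 : 0 ≤ M := (abs_nonneg _).trans (hM ![N+1,0,0] (by simp [Fin.sum_univ_three]) 0)
  have hH0 : 0 ≤ H := (abs_nonneg _).trans (hH 0)
  have e : ∑ m ∈ MIdx N, (∏ i, h i ^ m i / ((m i).factorial : ℝ)) * Dvpow m f (y, w) =
    ∑ c ∈ Finset.range (N+1), h 2 ^ c / (c.factorial : ℝ) *
      ∑ b ∈ Finset.range (N+1-c), h 1 ^ b / (b.factorial : ℝ) *
        ∑ a ∈ Finset.range (N+1-c-b), h 0 ^ a / (a.factorial : ℝ) *
          (Dv 0)^[a] ((Dv 1)^[b] ((Dv 2)^[c] f)) (y, w) := by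
    rw [sum_MIdx]
    simp only [Finset.mul_sum]
    refine Finset.sum_congr rfl fun c _ => Finset.sum_congr rfl fun b _ =>
      Finset.sum_congr rfl fun a _ => ?_
    simp [Fin.prod_univ_three, Dvpow]
    ring
  rw [e]
  refine step_combine (N+1) _ (h 2) H M (1 + (N + 1 : ℕ) * 1)
    (fun c => (Dv 2)^[c] f (y, w + h 0 • e3 0 + h 1 • e3 1)) _ hM0 (by positivity) (hH 2)
    (taylor_line 2 y M (N+1) f hf (fun v => ?_) _ _) ?_
  · exact hM ![0,0,N+1] (by simp [Fin.sum_univ_three]) v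
  intro c hc
  have hc1 : ContDiff ℝ (N + 1 - c : ℕ) ((Dv 2)^[c] f) :=
    Dv_iter_contDiff 2 c (N+1-c) f (by rwa [Nat.sub_add_cancel hc.le])
  refine (step_combine (N+1-c) _ (h 1) H M 1
    (fun b => (Dv 1)^[b] ((Dv 2)^[c] f) (y, w + h 0 • e3 0)) _ hM0 zero_le_one (hH 1)
    (taylor_line 1 y M (N+1-c) _ hc1 (fun v => ?_) _ _) ?_).trans ?_
  · exact hM ![0,N+1-c,c] (by simp [Fin.sum_univ_three]; omega) v
  · intro b hb
    have hb1 : ContDiff ℝ (N + 1 - c - b : ℕ) ((Dv 1)^[b] ((Dv 2)^[c] f)) :=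
      Dv_iter_contDiff 1 b (N+1-c-b) _ (by rwa [Nat.sub_add_cancel hb.le])
    refine (taylor_line 0 y M (N+1-c-b) _ hb1 (fun v => ?_) _ _).trans ?_
    · exact hM ![N+1-c-b,b,c] (by simp [Fin.sum_univ_three]; omega) v
    · rw [one_mul]
      have := hH 0
      gcongr
  · have : ((N + 1 - c : ℕ) : ℝ) ≤ (N + 1 : ℕ) := by exact_mod_cast Nat.sub_le _ _
    gcongr

lemma decomp (w u : E3) : w + u = w + u 0 • e3 0 + u 1 • e3 1 + u 2 • e3 2 := by
  ext i
  fin_cases i <;> simp [e3]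

lemma Dvpow_continuous (N : ℕ) (f : E3 × E3 → ℝ) (hf : ContDiff ℝ (N + 1 : ℕ) f)
    (m : Fin 3 → ℕ) (hm : ∑ i, m i ≤ N + 1) : Continuous (Dvpow m f) := by
  rw [Fin.sum_univ_three] at hm
  have h2 : ContDiff ℝ (m 0 + m 1 + m 2 : ℕ) f := hf.of_le (by exact_mod_cast hm)
  have : ContDiff ℝ (0 : ℕ) (Dvpow m f) := by
    refine Dv_iter_contDiff 0 (m 0) 0 _ (Dv_iter_contDiff 1 (m 1) _ _ (Dv_iter_contDiff 2 (m 2) _ _ ?_))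
    rwa [zero_add]
  exact this.continuous

noncomputable def jb (y : E3) : ℝ := Real.sqrt (1 + ‖y‖ ^ 2)

lemma jb_one (y : E3) : 1 ≤ jb y := by
  unfold jb; rw [Real.one_le_sqrt]; nlinarith [sq_nonneg ‖y‖]

lemma norm_le_jb (y : E3) : ‖y‖ ≤ jb y := by
  unfold jb; apply Real.le_sqrt_of_sq_le; linarith

lemma jb_integrable : Integrable (fun y : E3 => (jb y ^ 4)⁻¹) := by
  have h := integrable_rpow_neg_one_add_norm_sq (E := E3) (μ := volume) (r := 4) (by simp; norm_num)
  refine h.congr (Filter.Eventually.of_forall fun y => ?_)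
  have h0 : (0:ℝ) ≤ 1 + ‖y‖ ^ 2 := by positivity
  simp only [jb]
  rw [show (-(4:ℝ)/2) = -((2:ℕ):ℝ) by norm_num, Real.rpow_neg h0, Real.rpow_natCast,
    show Real.sqrt (1 + ‖y‖ ^ 2) ^ 4 = (Real.sqrt (1 + ‖y‖ ^ 2) ^ 2) ^ 2 by ring, Real.sq_sqrt h0]

lemma coord_le (y : E3) (i : Fin 3) : |y i| ≤ ‖y‖ := by
  simpa using PiLp.norm_apply_le y i

theorem self_similar_expansion_linear_density (N : ℕ) :
    ∃ Cc : (Fin 3 → ℕ) → ℝ, ∃ C : ℝ, 0 < C ∧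
      ∀ f₀ : E3 × E3 → ℝ, ContDiff ℝ (N + 1 : ℕ) f₀ →
        ∀ S : (Fin 3 → ℕ) → ℝ,
          (∀ m : Fin 3 → ℕ, (∑ i, m i) ≤ N + 1 →
            ∀ z v : E3,
              Real.sqrt (1 + ‖z‖ ^ 2) ^ (N + 5) * |Dvpow m f₀ (z, v)| ≤ S m) →
          ∀ t : ℝ, 2 ≤ t → ∀ x : E3,
            |t ^ 3 * (∫ v : E3, f₀ (x - t • v, v))
              - ∑ m ∈ MIdx N, (Cc m / t ^ (∑ i, m i)) *
                  ∫ y : E3, (∏ i, y i ^ m i) * Dvpow m f₀ (y, (1 / t) • x)|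
            ≤ (C / t ^ (N + 1)) * ∑ m ∈ MIdxTop N, S m := by
  set K : ℝ := (1 + (N + 1 : ℕ) * (1 + (N + 1 : ℕ) * 1)) with hK
  have hK0 : 0 < K := by positivity
  set I : ℝ := ∫ y : E3, (jb y ^ 4)⁻¹ with hI
  have hI0 : 0 ≤ I := integral_nonneg fun y => by
    have := jb_one y
    positivity
  refine ⟨fun m => ∏ i, (-1) ^ m i / ((m i).factorial : ℝ), K * (I + 1), by positivity, ?_⟩
  intro f hf S hS t ht x
  have ht0 : 0 < t := by linarith
  have hj : ∀ y : E3, 0 < jb y := fun y => zero_lt_one.trans_le (jb_one y)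
  have hS' : ∀ m : Fin 3 → ℕ, (∑ i, m i) ≤ N + 1 → ∀ z v : E3,
      |Dvpow m f (z, v)| ≤ S m * (jb z ^ (N + 5))⁻¹ := by
    intro m hm z v
    rw [← div_eq_mul_inv, le_div_iff₀ (by have := hj z; positivity), mul_comm]
    exact hS m hm z v
  have hSn : ∀ m : Fin 3 → ℕ, (∑ i, m i) ≤ N + 1 → 0 ≤ S m := fun m hm =>
    le_trans (by positivity) (hS m hm 0 0)
  set T := ∑ m ∈ MIdxTop N, S m with hT
  have hST : ∀ m : Fin 3 → ℕ, (∑ i, m i) = N + 1 → S m ≤ T := by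
    intro m hm
    refine Finset.single_le_sum (f := S) (fun m' hm' => hSn m' ?_) ?_
    · simp only [MIdxTop, Finset.mem_filter] at hm'; exact hm'.2.le
    · simp only [MIdxTop, Finset.mem_filter, Finset.mem_Iic]
      refine ⟨fun i => ?_, hm⟩
      rw [← hm]
      exact Finset.single_le_sum (f := m) (fun _ _ => Nat.zero_le _) (Finset.mem_univ i)
  have hT0 : 0 ≤ T := (hSn ![N+1,0,0] (by simp [Fin.sum_univ_three])).trans
    (hST _ (by simp [Fin.sum_univ_three]))
  set w : E3 := (1 / t) • x with hw
  -- change of variables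
  have hcv : t ^ 3 * (∫ v : E3, f (x - t • v, v)) = ∫ y : E3, f (y, w + (-(1 / t)) • y) := by
    have h1 := integral_sub_left_eq_self (μ := (volume : Measure E3))
      (fun y : E3 => f (y, w + (-(1 / t)) • y)) x
    have h2 := Measure.integral_comp_smul (volume : Measure E3)
      (fun y : E3 => f (x - y, w + (-(1 / t)) • (x - y))) t
    rw [h1] at h2
    have h3 : ∀ v : E3, w + (-(1 / t)) • (x - t • v) = v := by
      intro v
      rw [hw, smul_sub, smul_smul]
      have : -(1 / t) * t = -1 := by field_simp
      rw [this]; module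
    simp only [h3] at h2
    rw [h2]
    simp only [finrank_euclideanSpace, Fintype.card_fin, smul_eq_mul]
    rw [abs_of_pos (by positivity), ← mul_assoc, mul_inv_cancel₀ (by positivity), one_mul]
  -- integrability
  have hint : ∀ m ∈ MIdx N, Integrable (fun y : E3 => (∏ i, y i ^ m i) * Dvpow m f (y, w)) := by
    intro m hm
    simp only [MIdx, Finset.mem_filter] at hm
    have hm' := hm.2
    refine (jb_integrable.const_mul (S m)).mono' ?_ (Filter.Eventually.of_forall fun y => ?_)
    · have hc := Dvpow_continuous N f hf m (by omega)
      exact Continuous.aestronglyMeasurable (by fun_prop)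
    · have h1 : |∏ i, y i ^ m i| ≤ jb y ^ (N + 1) := by
        rw [Finset.abs_prod]
        calc ∏ i, |y i ^ m i| ≤ ∏ i, jb y ^ m i := by
              refine Finset.prod_le_prod (fun _ _ => abs_nonneg _) fun i _ => ?_
              rw [abs_pow]
              have := (coord_le y i).trans (norm_le_jb y)
              gcongr
          _ = jb y ^ (∑ i, m i) := by rw [Finset.prod_pow_eq_pow_sum]
          _ ≤ _ := pow_le_pow_right₀ (jb_one y) (by omega)
      rw [Real.norm_eq_abs, abs_mul]
      have := hj y
      calc _ ≤ jb y ^ (N + 1) * (S m * (jb y ^ (N + 5))⁻¹) := by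
            gcongr
            exact hS' m (by omega) y w
        _ = _ := by field_simp; ring
  have hint0 : Integrable (fun y : E3 => f (y, w + (-(1 / t)) • y)) := by
    refine (jb_integrable.const_mul (S 0)).mono' ?_ (Filter.Eventually.of_forall fun y => ?_)
    · have hc := hf.continuous
      exact Continuous.aestronglyMeasurable (by fun_prop)
    · rw [Real.norm_eq_abs]
      have h1 := hS' 0 (by simp) y (w + (-(1 / t)) • y)
      have h0 := hSn 0 (by simp)
      have h2 := jb_one y
      have h3 := hj y
      refine h1.trans ?_
      gcongr
      omega
  -- pointwise bound
  have hpt : ∀ y : E3, ‖f (y, w + (-(1 / t)) • y) - ∑ m ∈ MIdx N,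
      ((∏ i, (-1) ^ m i / ((m i).factorial : ℝ)) / t ^ (∑ i, m i)) *
        ((∏ i, y i ^ m i) * Dvpow m f (y, w))‖ ≤ (K / t ^ (N + 1) * T) * (jb y ^ 4)⁻¹ := by
    intro y
    have h3 := hj y
    have := taylor_three N f hf y w (fun i => -(1 / t) * y i) (jb y / t)
      (T * (jb y ^ (N + 5))⁻¹) (fun i => ?_) (fun m hm v => ?_)
    · have e : ((∑ m ∈ MIdx N,
          ((∏ i, (-1) ^ m i / ((m i).factorial : ℝ)) / t ^ (∑ i, m i)) *
            ((∏ i, y i ^ m i) * Dvpow m f (y, w)))) =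
          ∑ m ∈ MIdx N, (∏ i, (-(1 / t) * y i) ^ m i / ((m i).factorial : ℝ)) *
            Dvpow m f (y, w) := by
        refine Finset.sum_congr rfl fun m _ => ?_
        rw [← mul_assoc, ← Finset.prod_pow_eq_pow_sum, ← Finset.prod_div_distrib,
          ← Finset.prod_mul_distrib]
        congr 1
        refine Finset.prod_congr rfl fun i _ => ?_
        rw [show -(1 / t) * y i = (-1) * y i / t by ring, div_pow, mul_pow]
        ring
      rw [Real.norm_eq_abs, e, decomp w]
      refine this.trans (le_of_eq ?_)
      rw [← hK, div_pow]
      field_simp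
      ring
    · rw [abs_mul, abs_neg, abs_of_pos (by positivity : 0 < 1 / t)]
      have := (coord_le y i).trans (norm_le_jb y)
      calc 1 / t * |y i| ≤ 1 / t * jb y := by gcongr
        _ = _ := by ring
    · refine (hS' m hm.le y v).trans ?_
      have := hST m hm
      gcongr
  rw [hcv]
  simp only [← integral_const_mul]
  rw [← integral_finsetSum _ (fun m hm => (hint m hm).const_mul _),
    ← integral_sub hint0 (integrable_finsetSum _ (fun m hm => (hint m hm).const_mul _)),
    ← Real.norm_eq_abs]
  refine (norm_integral_le_of_norm_le (jb_integrable.const_mul _)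
    (Filter.Eventually.of_forall hpt)).trans ?_
  rw [integral_const_mul, ← hI]
  calc K / t ^ (N + 1) * T * I ≤ K / t ^ (N + 1) * T * (I + 1) := by gcongr; linarith
    _ = _ := by ring
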